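/- arXiv:1308.3956 — 4 statements merged into one kernel-verified Lean document; each statement's English description precedes it below -/
import Mathlib

section
/- Let r > 0 and let b ≥ 1 be an integer with √5 ≤ b·r (equivalently, the side length 1/b of the subsquares satisfies √5·(1/b) ≤ r). Partition the unit square [0,1]² into the b² closed squares Q_{i,j} = [i/b, (i+1)/b] × [j/b, (j+1)/b], 0 ≤ i, j ≤ b−1. If S ⊆ [0,1]² is a finite nonempty set of points such that every square Q_{i,j} contains at least one point of S, then the geometric graph on S with radius r (vertices the points of S, edge between distinct p, q ∈ S iff ‖p − q‖₂ ≤ r) is connected. -/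
/-!
Cells of the grid that share a facet form the Hasse diagram of the finite lattice of cell indices,
which is connected. Two points in the same cell or in cells sharing a facet differ by at most
`2 / b` in one coordinate and by at most `1 / b` in the others, so in dimension `d` their distance
is at most `√(d + 3) / b ≤ r`. As every cell is occupied, connectedness passes from the cells to
the points.
-/

section Graph

open SimpleGraph

theorem hasse_connected_of_locallyFiniteOrder (α : Type*) [PartialOrder α] [LocallyFiniteOrder α]
    [IsCodirectedOrder α] [Nonempty α] : (hasse α).Connected := by
  have reachable_of_le {x y : α} (hxy : x ≤ y) : (hasse α).Reachable x y :=
    (reachable_iff_reflTransGen x y).2 <|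
      Relation.ReflTransGen.mono (fun _ _ ↦ Or.inl) _ _ (le_iff_reflTransGen_covBy.1 hxy)
  refine ⟨fun x y ↦ ?_⟩
  obtain ⟨z, hzx, hzy⟩ := exists_le_le x y
  exact (reachable_of_le hzx).symm.trans (reachable_of_le hzy)

theorem connected_of_cover_of_connected {V K : Type*} {G : SimpleGraph V} {H : SimpleGraph K}
    (hH : H.Connected) {A : K → Set V} (hne : ∀ k, (A k).Nonempty) (hcover : ∀ v, ∃ k, v ∈ A k)
    (hreach : ∀ ⦃k l⦄, k = l ∨ H.Adj k l → ∀ u ∈ A k, ∀ v ∈ A l, G.Reachable u v) :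
    G.Connected := by
  have reachable_of_walk {k l : K} (w : H.Walk k l) : ∀ u ∈ A k, ∀ v ∈ A l, G.Reachable u v := by
    induction w with
    | nil => exact hreach (.inl rfl)
    | @cons k m l hkm _ ih =>
      intro u hu v hv
      obtain ⟨c, hc⟩ := hne m
      exact (hreach (.inr hkm) u hu c hc).trans (ih c hc v hv)
  obtain ⟨k₀⟩ := hH.nonempty
  have : Nonempty V := (hne k₀).to_type
  refine ⟨fun u v ↦ ?_⟩
  obtain ⟨k, hu⟩ := hcover u
  obtain ⟨l, hv⟩ := hcover v
  obtain ⟨w⟩ := hH.preconnected k l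
  exact reachable_of_walk w u hu v hv

/-- The geometric graph of radius `r` on a family of points `x`. Its vertices are the indices of the
family, so a set of points is the family `Subtype.val`. -/
def geometricGraph {V E : Type*} [SeminormedAddGroup E] (x : V → E) (r : ℝ) : SimpleGraph V :=
  fromRel fun u v ↦ ‖x u - x v‖ ≤ r

theorem geometricGraph_reachable_of_norm_sub_le {V E : Type*} [SeminormedAddGroup E] {x : V → E}
    {r : ℝ} {u v : V} (h : ‖x u - x v‖ ≤ r) : (geometricGraph x r).Reachable u v := by
  obtain rfl | huv := eq_or_ne u v
  · rfl
  · exact Adj.reachable ⟨huv, .inl h⟩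

end Graph

section Grid

variable {ι : Type*} {b : ℕ}

/-- The closed cell with index `k` of the partition of the unit cube `[0, 1]^ι` into cubes of side
`1 / b`. -/
def gridCube (k : ι → Fin b) : Set (EuclideanSpace ℝ ι) :=
  {p | ∀ i, p i ∈ Set.Icc ((k i : ℝ) / b) (((k i : ℝ) + 1) / b)}

theorem exists_fin_mem_Icc_div (hb : b ≠ 0) {t : ℝ} (ht : t ∈ Set.Icc (0 : ℝ) 1) :
    ∃ k : Fin b, t ∈ Set.Icc ((k : ℝ) / b) (((k : ℝ) + 1) / b) := by
  have hb' : (0 : ℝ) < b := by positivity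
  simp only [Set.mem_Icc, div_le_iff₀ hb', le_div_iff₀ hb']
  obtain ht1 | rfl := ht.2.lt_or_eq
  · have htb : 0 ≤ t * b := mul_nonneg ht.1 hb'.le
    have hfloor : ⌊t * b⌋₊ < b := (Nat.floor_lt htb).2 (mul_lt_of_lt_one_left hb' ht1)
    exact ⟨⟨⌊t * b⌋₊, hfloor⟩, Nat.floor_le htb, (Nat.lt_floor_add_one _).le⟩
  · exact ⟨⟨b - 1, by lia⟩, by simp [Nat.cast_pred (Nat.pos_of_ne_zero hb)]⟩

theorem exists_mem_gridCube (hb : b ≠ 0) {p : EuclideanSpace ℝ ι}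
    (hp : ∀ i, p i ∈ Set.Icc (0 : ℝ) 1) : ∃ k : ι → Fin b, p ∈ gridCube k := by
  choose k hk using fun i ↦ exists_fin_mem_Icc_div hb (hp i)
  exact ⟨k, hk⟩

theorem mul_abs_sub_le_of_mem_gridCube {k l : ι → Fin b} {p q : EuclideanSpace ℝ ι}
    (hp : p ∈ gridCube k) (hq : q ∈ gridCube l) (i : ι) :
    b * |p i - q i| ≤ 1 + |(k i : ℝ) - l i| := by
  have hb : (0 : ℝ) < b := mod_cast (k i).pos
  obtain ⟨hkp, hpk⟩ := hp i
  obtain ⟨hlq, hql⟩ := hq i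
  rw [div_le_iff₀ hb] at hkp hlq
  rw [le_div_iff₀ hb] at hpk hql
  rw [← abs_of_pos hb, ← abs_mul, abs_le]
  constructor <;> linarith [neg_abs_le ((k i : ℝ) - l i), le_abs_self ((k i : ℝ) - l i)]

variable [Fintype ι]

theorem sum_sq_one_add_abs_sub_le_of_wcovBy {k l : ι → Fin b} (h : k ⩿ l) :
    ∑ i, (1 + |(k i : ℝ) - l i|) ^ 2 ≤ (Fintype.card ι : ℝ) + 3 := by
  classical
  obtain hkl | rfl := h.covBy_or_eq
  · obtain ⟨i, hi, heq⟩ := Pi.covBy_iff.1 hkl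
    have hli : (l i : ℝ) = k i + 1 := by
      exact_mod_cast (Nat.covBy_iff_add_one_eq.1 (Fin.covBy_iff.1 hi)).symm
    have hterm (j : ι) : (1 + |(k j : ℝ) - l j|) ^ 2 = 1 + if j = i then 3 else 0 := by
      obtain rfl | hj := eq_or_ne j i
      · norm_num [hli]
      · simp [heq j hj, hj]
    simp [hterm, Finset.sum_add_distrib]
  · simp

theorem mul_norm_sub_le_of_mem_gridCube_of_wcovBy {k l : ι → Fin b} (h : k ⩿ l)
    {p q : EuclideanSpace ℝ ι} (hp : p ∈ gridCube k) (hq : q ∈ gridCube l) :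
    b * ‖p - q‖ ≤ √(Fintype.card ι + 3) := by
  refine Real.le_sqrt_of_sq_le ?_
  calc (b * ‖p - q‖) ^ 2 = ∑ i, (b * |p i - q i|) ^ 2 := by
        simp [mul_pow, EuclideanSpace.norm_sq_eq, Finset.mul_sum]
    _ ≤ ∑ i, (1 + |(k i : ℝ) - l i|) ^ 2 := by
        gcongr with i
        exact mul_abs_sub_le_of_mem_gridCube hp hq i
    _ ≤ Fintype.card ι + 3 := sum_sq_one_add_abs_sub_le_of_wcovBy h

theorem stmt_6_general {V : Type*} {x : V → EuclideanSpace ℝ ι} {r : ℝ}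
    (hbr : √(Fintype.card ι + 3) ≤ b * r) (hx : ∀ v i, x v i ∈ Set.Icc (0 : ℝ) 1)
    (hocc : ∀ k : ι → Fin b, ∃ v, x v ∈ gridCube k) :
    (geometricGraph x r).Connected := by
  classical
  have hb : b ≠ 0 := by
    rintro rfl
    have : 0 < √(Fintype.card ι + 3 : ℝ) := by positivity
    simp only [Nat.cast_zero, zero_mul] at hbr
    linarith
  have : NeZero b := ⟨hb⟩
  have hclose {k l : ι → Fin b} (h : k ⩿ l) {u v : V} (hu : x u ∈ gridCube k)
      (hv : x v ∈ gridCube l) : (geometricGraph x r).Reachable u v :=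
    geometricGraph_reachable_of_norm_sub_le <| le_of_mul_le_mul_left
      ((mul_norm_sub_le_of_mem_gridCube_of_wcovBy h hu hv).trans hbr) (by positivity)
  refine connected_of_cover_of_connected (hasse_connected_of_locallyFiniteOrder (ι → Fin b))
    (A := fun k ↦ {v | x v ∈ gridCube k}) hocc (fun v ↦ exists_mem_gridCube hb (hx v)) ?_
  rintro k l (rfl | hkl | hlk) u hu v hv
  · exact hclose .rfl hu hv
  · exact hclose hkl.wcovBy hu hv
  · exact (hclose hlk.wcovBy hv hu).symm

end Grid

/-- let `r > 0` and `b ≥ 1` with `√5 ≤ b·r` (i.e. `√5·(1/b) ≤ r`).  Partition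
the unit square into the `b²` closed squares `[i/b,(i+1)/b] × [j/b,(j+1)/b]`.  If `S` is a
finite nonempty set of points of the unit square such that every such square contains a point
of `S`, then the geometric graph on `S` with radius `r` (edge between distinct `p, q ∈ S` iff
`‖p − q‖₂ ≤ r`) is connected. -/
theorem stmt_6 (r : ℝ) (hr : 0 < r) (b : ℕ) (hb : 1 ≤ b) (hbr : Real.sqrt 5 ≤ (b : ℝ) * r)
    (S : Finset (EuclideanSpace ℝ (Fin 2)))
    (hS : ∀ p ∈ S, ∀ i : Fin 2, p i ∈ Set.Icc (0 : ℝ) 1)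
    (hne : S.Nonempty)
    (hocc : ∀ i j : Fin b, ∃ p ∈ S,
      p 0 ∈ Set.Icc ((i : ℝ) / b) (((i : ℝ) + 1) / b) ∧
      p 1 ∈ Set.Icc ((j : ℝ) / b) (((j : ℝ) + 1) / b)) :
    (SimpleGraph.fromRel
      fun u v : {p : EuclideanSpace ℝ (Fin 2) // p ∈ S} =>
        ‖(u : EuclideanSpace ℝ (Fin 2)) - (v : EuclideanSpace ℝ (Fin 2))‖ ≤ r).Connected := by
  refine stmt_6_general (b := b) (by norm_num [hbr]) (fun v ↦ hS v v.2) fun k ↦ ?_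
  obtain ⟨p, hp, hp0, hp1⟩ := hocc (k 0) (k 1)
  exact ⟨⟨p, hp⟩, Fin.forall_fin_two.2 ⟨hp0, hp1⟩⟩
end

section
/- Suppose n balls are tossed independently and uniformly at random into m bins, with 1 ≤ n ≤ m. Then the probability that at least one bin contains exactly one ball is at least (1 − 1/m)^{m−1}, which is strictly greater than e^{−1}. -/
/-!
Fix one ball `j`. It is alone in its bin exactly when each of the other `n - 1` balls avoids that
bin, which happens with probability `(1 - 1 / m) ^ (n - 1)`; this is already at least
`(1 - 1 / m) ^ (m - 1)` when `n ≤ m`. For `m ≥ 2` the bound by `e⁻¹` is `1 + t < exp t` at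
`t = 1 / (m - 1)`, inverted and raised to the power `m - 1`.
-/

section Counting

variable {ι β : Type*}

theorem natCard_fiber_apply_eq_one_iff (f : ι → β) (j : ι) :
    Nat.card {i // f i = f j} = 1 ↔ ∀ i ≠ j, f i ≠ f j := by
  rw [Nat.card_eq_one_iff_exists]
  constructor
  · rintro ⟨k, hk⟩ i hij hfij
    exact hij (congrArg Subtype.val ((hk ⟨i, hfij⟩).trans (hk ⟨j, rfl⟩).symm))
  · exact fun h ↦ ⟨⟨j, rfl⟩, fun i ↦ Subtype.ext (by_contra fun hij ↦ h i hij i.2)⟩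

theorem natCard_ne [Finite ι] (j : ι) : Nat.card {i // i ≠ j} = Nat.card ι - 1 := by
  have := Fintype.ofFinite ι
  classical
  rw [Nat.card_eq_fintype_card, Nat.card_eq_fintype_card]
  exact Set.card_ne_eq j

/-- A function that takes its value at `j` nowhere else amounts to that value `b` together with an
arbitrary map from the remaining points to the values other than `b`. This counts the tosses in
which ball `j` is alone in its bin. -/
def uniqueValueAtEquiv [DecidableEq ι] (j : ι) :
    {f : ι → β // ∀ i ≠ j, f i ≠ f j} ≃ Σ b : β, ({i // i ≠ j} → {c // c ≠ b}) :=
  calc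
    {f : ι → β // ∀ i ≠ j, f i ≠ f j}
      ≃ {p : β × ({i // i ≠ j} → β) // ∀ i, p.2 i ≠ p.1} :=
        (Equiv.funSplitAt j β).subtypeEquiv fun _ ↦
          ⟨fun h i ↦ h i i.2, fun h i hi ↦ h ⟨i, hi⟩⟩
    _ ≃ Σ b : β, {g : {i // i ≠ j} → β // ∀ i, g i ≠ b} :=
        Equiv.subtypeProdEquivSigmaSubtype fun b (g : {i // i ≠ j} → β) ↦ ∀ i, g i ≠ b
    _ ≃ Σ b : β, ({i // i ≠ j} → {c // c ≠ b}) :=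
        Equiv.sigmaCongrRight fun b ↦ Equiv.subtypePiEquivPi (p := fun _ c ↦ c ≠ b)

theorem natCard_forall_ne_apply_ne [Finite ι] [Finite β] (j : ι) :
    Nat.card {f : ι → β // ∀ i ≠ j, f i ≠ f j} =
      Nat.card β * (Nat.card β - 1) ^ (Nat.card ι - 1) := by
  have := Fintype.ofFinite β
  classical
  rw [Nat.card_congr (uniqueValueAtEquiv j), Nat.card_sigma]
  simp only [Nat.card_fun, natCard_ne, Finset.sum_const, Finset.card_univ, smul_eq_mul,
    Nat.card_eq_fintype_card (α := β)]

theorem natCard_forall_ne_apply_ne_div_pow [Finite ι] [Finite β] [Nonempty β] (j : ι) :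
    (Nat.card {f : ι → β // ∀ i ≠ j, f i ≠ f j} : ℝ) / (Nat.card β : ℝ) ^ Nat.card ι =
      (1 - 1 / (Nat.card β : ℝ)) ^ (Nat.card ι - 1) := by
  have hβ : (Nat.card β : ℝ) ≠ 0 := Nat.cast_ne_zero.mpr Nat.card_pos.ne'
  have : Nonempty ι := ⟨j⟩
  have hι : Nat.card ι ≠ 0 := Nat.card_pos.ne'
  rw [natCard_forall_ne_apply_ne, Nat.cast_mul, Nat.cast_pow, Nat.cast_pred Nat.card_pos,
    ← mul_pow_sub_one hι, mul_div_mul_left _ _ hβ, ← div_pow, sub_div, div_self hβ]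

theorem one_sub_one_div_pow_le_natCard_exists_fiber_card_eq_one_div_pow
    [Finite ι] [Nonempty ι] [Finite β] [Nonempty β] :
    (1 - 1 / (Nat.card β : ℝ)) ^ (Nat.card ι - 1) ≤
      (Nat.card {f : ι → β // ∃ b, Nat.card {i // f i = b} = 1} : ℝ) /
        (Nat.card β : ℝ) ^ Nat.card ι := by
  obtain ⟨j⟩ := ‹Nonempty ι›
  rw [← natCard_forall_ne_apply_ne_div_pow j]
  gcongr
  exact Nat.card_mono (Set.toFinite {f : ι → β | ∃ b, Nat.card {i // f i = b} = 1})
    fun f hf ↦ ⟨f j, (natCard_fiber_apply_eq_one_iff f j).mpr hf⟩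

end Counting

section Exponential

open Real

theorem exp_neg_lt_inv_one_add {t : ℝ} (ht : -1 < t) (ht₀ : t ≠ 0) : exp (-t) < (1 + t)⁻¹ := by
  rw [exp_neg, add_comm]
  exact inv_strictAnti₀ (by linarith) (add_one_lt_exp ht₀)

theorem exp_neg_one_lt_one_sub_one_div_pow {m : ℕ} (hm : m ≠ 0) :
    exp (-1) < (1 - 1 / (m : ℝ)) ^ (m - 1) := by
  obtain ⟨n, rfl⟩ := Nat.exists_eq_add_one_of_ne_zero hm
  rw [Nat.add_sub_cancel]
  rcases eq_or_ne n 0 with rfl | hn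
  · simp
  have hn' : (0 : ℝ) < n := by positivity
  calc
    exp (-1) = exp (-(n : ℝ)⁻¹) ^ n := by
      rw [← exp_nat_mul, mul_neg, mul_inv_cancel₀ hn'.ne']
    _ < ((1 + (n : ℝ)⁻¹)⁻¹) ^ n := by
      gcongr
      exact exp_neg_lt_inv_one_add (by linarith [inv_pos.mpr hn']) (inv_pos.mpr hn').ne'
    _ = (1 - 1 / ((n + 1 : ℕ) : ℝ)) ^ n := by
      congr 1
      push_cast
      field_simp
      ring

end Exponential

/-- toss `n` balls uniformly and independently into `m` bins, `1 ≤ n ≤ m`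
(modeled by the uniform distribution on `Fin n → Fin m`, so the probability of an event is the
ratio of the number of favorable outcomes to `m ^ n`).  The probability that at least one bin
contains exactly one ball is at least `(1 − 1/m)^(m−1)`, which is strictly greater than
`e⁻¹` (for `m = 1` the convention `0^0 = 1` applies). -/
theorem stmt_8 (n m : ℕ) (hn : 1 ≤ n) (hnm : n ≤ m) :
    ((1 - 1 / (m : ℝ)) ^ (m - 1) ≤
      (Nat.card {f : Fin n → Fin m //
          ∃ b : Fin m, Nat.card {j : Fin n // f j = b} = 1} : ℝ) / (m : ℝ) ^ n) ∧
    Real.exp (-1) < (1 - 1 / (m : ℝ)) ^ (m - 1) := by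
  have hm : 1 ≤ m := hn.trans hnm
  have : NeZero n := ⟨by lia⟩
  have : NeZero m := ⟨by lia⟩
  refine ⟨?_, exp_neg_one_lt_one_sub_one_div_pow (NeZero.ne m)⟩
  have hinv : 1 / (m : ℝ) ≤ 1 := by simpa using Nat.cast_inv_le_one (α := ℝ) m
  calc
    (1 - 1 / (m : ℝ)) ^ (m - 1) ≤ (1 - 1 / (m : ℝ)) ^ (n - 1) :=
      pow_le_pow_of_le_one (sub_nonneg.mpr hinv) (sub_le_self 1 (by positivity)) (by lia)
    _ ≤ _ := by
      simpa only [Nat.card_fin] using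
        one_sub_one_div_pow_le_natCard_exists_fiber_card_eq_one_div_pow (ι := Fin n) (β := Fin m)
end

section
/- For every ε > 0 there exists M such that for every integer m > M and every integer n with m < n < m·log m, if n balls are tossed independently and uniformly at random into m bins, then the probability that at least one bin contains exactly one ball is at least (1 − e^{−e})·e^{−1} − ε. -/
/-!
Call a ball alone if no other ball shares its bin, so that some bin holds exactly one ball iff some
ball is alone. Counting the ways to place `k` balls in distinct bins and all others elsewhere gives
the factorial moments of the number `X` of alone balls, and Cauchy–Schwarz in the form
`(𝔼 X)² ≤ ℙ(X ≠ 0) 𝔼 X²` becomes, with `t = m / (m - 1)`,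
`n ≤ ℙ(X ≠ 0) (t ^ (n - 1) + (n - 1) t)`.
For `n ≤ m log m` convexity of `exp` gives `t ^ (n - 1) ≤ 1 + e (n - 1) / log m`, so in fact
`ℙ(X ≠ 0) ≥ 1 - (e + 1) / log m`.
-/

open Finset Real

namespace BallsInBins

section Counting

variable {α β : Type*} [Fintype α] [DecidableEq α] [DecidableEq β]

/-- The balls `i` that are alone in their bin `f i`, for a placement `f` of the balls `α` into
the bins `β`. -/
def aloneBalls (f : α → β) : Finset α := {i | ∀ j, f j = f i → j = i}

lemma mem_aloneBalls {f : α → β} {i : α} : i ∈ aloneBalls f ↔ ∀ j, f j = f i → j = i := by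
  simp [aloneBalls]

lemma exists_card_fiber_eq_one_iff (f : α → β) :
    (∃ b, Nat.card {j // f j = b} = 1) ↔ (aloneBalls f).Nonempty := by
  simp only [Nat.card_eq_one_iff_exists, Finset.Nonempty, mem_aloneBalls]
  constructor
  · rintro ⟨b, ⟨i, hi⟩, hunique⟩
    exact ⟨i, fun j hj => congrArg Subtype.val (hunique ⟨j, hj.trans hi⟩)⟩
  · rintro ⟨i, hi⟩
    exact ⟨f i, ⟨i, rfl⟩, fun j => Subtype.ext (hi j j.2)⟩

variable [Fintype β]

/-- The placements that agree with `g` on `s` and send every ball outside `s` to a bin not used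
by `g`. -/
def isolatedExtensions {s : Finset α} (g : s ↪ β) : Finset (α → β) :=
  Fintype.piFinset fun i => if hi : i ∈ s then {g ⟨i, hi⟩} else (univ.map g)ᶜ

lemma card_isolatedExtensions {s : Finset α} (g : s ↪ β) :
    #(isolatedExtensions g) = (Fintype.card β - #s) ^ (Fintype.card α - #s) := by
  have hcard (i : α) : #(if hi : i ∈ s then {g ⟨i, hi⟩} else (univ.map g)ᶜ) =
      if i ∈ s then 1 else Fintype.card β - #s := by
    split_ifs <;> simp [card_compl]
  simp only [isolatedExtensions, Fintype.card_piFinset, hcard, prod_ite, prod_const, one_pow,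
    one_mul]
  rw [← compl_filter, card_compl, filter_mem_eq_inter, univ_inter]

lemma apply_eq_of_mem_isolatedExtensions {s : Finset α} {g : s ↪ β} {f : α → β}
    (hf : f ∈ isolatedExtensions g) (i : s) : f i = g i := by
  simpa using Fintype.mem_piFinset.1 hf i

lemma filter_subset_aloneBalls_eq_biUnion (s : Finset α) :
    ({f | s ⊆ aloneBalls f} : Finset (α → β)) =
      (univ : Finset (s ↪ β)).biUnion isolatedExtensions := by
  ext f
  simp only [mem_filter_univ, mem_biUnion, mem_univ, true_and]
  constructor
  · intro hs
    have halone (i : s) := mem_aloneBalls.1 (hs i.2)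
    refine ⟨⟨fun i => f i, fun i j hij => Subtype.ext (halone j i hij)⟩,
      Fintype.mem_piFinset.2 fun i => ?_⟩
    split_ifs with hi
    · exact mem_singleton_self _
    · simp only [mem_compl, mem_map, mem_univ, true_and]
      rintro ⟨j, hj⟩
      exact hi (halone j i hj.symm ▸ j.2)
  · rintro ⟨g, hf⟩ i hi
    have hfg := apply_eq_of_mem_isolatedExtensions hf
    refine mem_aloneBalls.2 fun j hj => ?_
    by_cases hjs : j ∈ s
    · have : g ⟨j, hjs⟩ = g ⟨i, hi⟩ := by rw [← hfg, ← hfg, hj]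
      exact congrArg Subtype.val (g.injective this)
    · have hmem := Fintype.mem_piFinset.1 hf j
      rw [dif_neg hjs, mem_compl, hj, hfg ⟨i, hi⟩] at hmem
      exact absurd (mem_map_of_mem g (mem_univ _)) hmem

lemma card_filter_subset_aloneBalls (s : Finset α) :
    #{f : α → β | s ⊆ aloneBalls f} =
      (Fintype.card β).descFactorial #s * (Fintype.card β - #s) ^ (Fintype.card α - #s) := by
  have hdisj : ((univ : Finset (s ↪ β)) : Set (s ↪ β)).PairwiseDisjoint isolatedExtensions := by
    refine fun g _ g' _ hne => disjoint_left.2 fun f hf hf' => hne ?_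
    ext i
    rw [← apply_eq_of_mem_isolatedExtensions hf, apply_eq_of_mem_isolatedExtensions hf']
  rw [filter_subset_aloneBalls_eq_biUnion, card_biUnion hdisj]
  simp [card_isolatedExtensions, Fintype.card_embedding_eq]

lemma sum_choose_card_aloneBalls (k : ℕ) :
    ∑ f : α → β, (#(aloneBalls f)).choose k =
      (Fintype.card α).choose k *
        ((Fintype.card β).descFactorial k * (Fintype.card β - k) ^ (Fintype.card α - k)) := by
  calc ∑ f : α → β, (#(aloneBalls f)).choose k
      = ∑ f : α → β, #{s ∈ powersetCard k univ | s ⊆ aloneBalls f} := by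
        refine sum_congr rfl fun f _ => ?_
        rw [← card_powersetCard]
        congr 1
        ext s
        simp [mem_powersetCard, and_comm]
    _ = ∑ s ∈ powersetCard k (univ : Finset α), #{f : α → β | s ⊆ aloneBalls f} :=
        sum_card_bipartiteAbove_eq_sum_card_bipartiteBelow fun f s => s ⊆ aloneBalls f
    _ = _ := by
        rw [sum_congr rfl fun s hs => by
          rw [card_filter_subset_aloneBalls, (mem_powersetCard.1 hs).2]]
        simp

lemma sum_card_aloneBalls :
    ∑ f : α → β, #(aloneBalls f) =
      Fintype.card α * Fintype.card β * (Fintype.card β - 1) ^ (Fintype.card α - 1) := by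
  simpa [mul_assoc] using sum_choose_card_aloneBalls (α := α) (β := β) 1

lemma sum_card_aloneBalls_sq :
    ∑ f : α → β, #(aloneBalls f) ^ 2 =
      Fintype.card α * Fintype.card β * (Fintype.card β - 1) ^ (Fintype.card α - 1) +
      Fintype.card α * (Fintype.card α - 1) * (Fintype.card β * (Fintype.card β - 1)) *
        (Fintype.card β - 2) ^ (Fintype.card α - 2) := by
  have two_mul_choose (x : ℕ) : 2 * x.choose 2 = x * (x - 1) := by
    rw [Nat.choose_two_right, Nat.mul_div_cancel' (Nat.even_mul_pred_self x).two_dvd]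
  have hsq (x : ℕ) : x ^ 2 = x + 2 * x.choose 2 := by
    rw [two_mul_choose]
    rcases x with _ | x
    · simp
    · rw [Nat.add_sub_cancel]; ring
  have hdesc : (Fintype.card β).descFactorial 2 = Fintype.card β * (Fintype.card β - 1) := by
    simp [Nat.descFactorial_succ, mul_comm]
  simp only [hsq #_, sum_add_distrib, ← mul_sum, sum_card_aloneBalls,
    sum_choose_card_aloneBalls, hdesc]
  rw [← two_mul_choose (Fintype.card α)]
  ring

end Counting

lemma sq_sum_le_card_filter_ne_zero_mul_sum_sq {ι R : Type*} [CommRing R] [LinearOrder R]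
    [IsStrictOrderedRing R] (s : Finset ι) (X : ι → R) :
    (∑ i ∈ s, X i) ^ 2 ≤ #{i ∈ s | X i ≠ 0} * ∑ i ∈ s, X i ^ 2 := by
  rw [← sum_filter_ne_zero s]
  refine sq_sum_le_card_mul_sum_sq.trans ?_
  gcongr
  exact filter_subset _ _

lemma mul_pow_mul_second_moment_le {m : ℝ} (hm : 2 ≤ m) (k : ℕ) :
    (k + 1) * m ^ (k + 1) *
        ((k + 1) * m * (m - 1) ^ k + (k + 1) * k * (m * (m - 1)) * (m - 2) ^ (k - 1)) ≤
      ((k + 1) * m * (m - 1) ^ k) ^ 2 * ((m / (m - 1)) ^ k + k * (m / (m - 1))) := by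
  have hm1 : 0 < m - 1 := by linarith
  have hbase0 : 0 ≤ m * (m - 2) := mul_nonneg (by positivity) (by linarith)
  have hbase : m * (m - 2) ≤ (m - 1) ^ 2 := by linarith [sq (m - 1)]
  have hpairs : k * (m ^ k * (m - 2) ^ (k - 1)) ≤ k * (m * ((m - 1) ^ 2) ^ (k - 1)) := by
    rcases k with _ | k
    · simp
    · rw [Nat.add_sub_cancel, pow_succ', mul_assoc m, ← mul_pow]
      gcongr _ * (m * ?_)
      exact pow_le_pow_left₀ hbase0 hbase k
  have hpow : (k : ℝ) * ((m - 1) ^ 2) ^ (k - 1) * (m - 1) ^ 2 = k * ((m - 1) ^ k) ^ 2 := by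
    rcases k with _ | k
    · simp
    · rw [Nat.add_sub_cancel, mul_assoc, ← pow_succ, pow_right_comm]
  calc (k + 1) * m ^ (k + 1) *
        ((k + 1) * m * (m - 1) ^ k + (k + 1) * k * (m * (m - 1)) * (m - 2) ^ (k - 1))
      = ((k + 1) * m) ^ 2 * (m ^ k * (m - 1) ^ k +
          (m - 1) * (k * (m ^ k * (m - 2) ^ (k - 1)))) := by ring
    _ ≤ ((k + 1) * m) ^ 2 * (m ^ k * (m - 1) ^ k +
          (m - 1) * (k * (m * ((m - 1) ^ 2) ^ (k - 1)))) := by gcongr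
    _ = ((k + 1) * m) ^ 2 * (m ^ k * (m - 1) ^ k +
          m / (m - 1) * (k * ((m - 1) ^ 2) ^ (k - 1) * (m - 1) ^ 2)) := by
        congr 2; field_simp
    _ = _ := by rw [hpow, div_pow]; field_simp

lemma card_mul_pow_le_card_filter_nonempty_mul (α β : Type*) [Fintype α] [DecidableEq α]
    [Fintype β] [DecidableEq β] (hα : 0 < Fintype.card α) (hβ : 2 ≤ Fintype.card β) :
    Fintype.card α * (Fintype.card β : ℝ) ^ Fintype.card α ≤
      #{f : α → β | (aloneBalls f).Nonempty} *
        ((Fintype.card β / (Fintype.card β - 1) : ℝ) ^ (Fintype.card α - 1) +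
          (Fintype.card α - 1 : ℕ) * (Fintype.card β / (Fintype.card β - 1))) := by
  have hmoments := sq_sum_le_card_filter_ne_zero_mul_sum_sq univ
    fun f : α → β => (#(aloneBalls f) : ℝ)
  simp only [ne_eq, Nat.cast_eq_zero, card_ne_zero] at hmoments
  set N : ℕ := #{f : α → β | (aloneBalls f).Nonempty}
  have hfirst := congrArg (Nat.cast (R := ℝ)) (sum_card_aloneBalls (α := α) (β := β))
  have hsecond := congrArg (Nat.cast (R := ℝ)) (sum_card_aloneBalls_sq (α := α) (β := β))
  obtain ⟨k, hk⟩ := Nat.exists_eq_add_one.2 hα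
  simp only [hk, Nat.add_sub_cancel, Nat.reduceSubDiff] at hfirst hsecond ⊢
  push_cast [Nat.cast_sub (one_le_two.trans hβ), Nat.cast_sub hβ] at hfirst hsecond ⊢
  rw [hfirst, hsecond] at hmoments
  have hm : (2 : ℝ) ≤ Fintype.card β := by exact_mod_cast hβ
  have hcompare := mul_pow_mul_second_moment_le hm k
  generalize (Fintype.card β : ℝ) = m at *
  have hm1 : 0 < m - 1 := by linarith
  set μ : ℝ := (k + 1) * m * (m - 1) ^ k
  set V : ℝ := μ + (k + 1) * k * (m * (m - 1)) * (m - 2) ^ (k - 1)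
  set R : ℝ := (m / (m - 1)) ^ k + k * (m / (m - 1))
  have hμ0 : 0 < μ := by positivity
  refine le_of_mul_le_mul_left ?_ (pow_pos hμ0 2)
  calc μ ^ 2 * ((k + 1) * m ^ (k + 1)) ≤ N * V * ((k + 1) * m ^ (k + 1)) := by gcongr
    _ = N * ((k + 1) * m ^ (k + 1) * V) := by ring
    _ ≤ N * (μ ^ 2 * R) := by gcongr
    _ = μ ^ 2 * (N * R) := by ring

lemma div_sub_one_pow_le {m : ℝ} (hm : 1 < m) {k : ℕ} (hk : k ≤ m * log m) :
    (m / (m - 1)) ^ k ≤ 1 + exp 1 * k / log m := by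
  have hm' : 0 < m - 1 := sub_pos.2 hm
  have hlog : 0 < log m := log_pos hm
  set θ : ℝ := k / (m * log m) with hθ
  set U : ℝ := m * log m / (m - 1) with hU
  have hθ0 : 0 ≤ θ := by positivity
  have hθ1 : θ ≤ 1 := div_le_one_of_le₀ hk (by positivity)
  have hexpU : exp U ≤ m * exp 1 := by
    have hlog_div : log m / (m - 1) ≤ 1 :=
      div_le_one_of_le₀ (log_le_sub_one_of_pos (by positivity)) hm'.le
    calc exp U = exp (log m + log m / (m - 1)) := by congr 1; rw [hU]; field_simp; ring
      _ = m * exp (log m / (m - 1)) := by rw [exp_add, exp_log (by positivity)]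
      _ ≤ m * exp 1 := by gcongr
  have hconvex : exp (θ * U) ≤ (1 - θ) + θ * exp U := by
    simpa using convexOn_exp.2 (Set.mem_univ 0) (Set.mem_univ U) (sub_nonneg.2 hθ1) hθ0
      (sub_add_cancel 1 θ)
  calc (m / (m - 1)) ^ k = (1 / (m - 1) + 1) ^ k := by congr 1; field_simp; ring
    _ ≤ exp (1 / (m - 1)) ^ k := by gcongr; exact add_one_le_exp _
    _ = exp (θ * U) := by rw [← exp_nat_mul]; congr 1; rw [hθ, hU]; field_simp
    _ ≤ 1 + θ * (m * exp 1) := by nlinarith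
    _ = 1 + exp 1 * k / log m := by rw [hθ]; field_simp

lemma div_sub_one_pow_add_mul_le {m : ℝ} (hm : 1 < m) {k : ℕ} (hk : k ≤ m * log m) :
    (m / (m - 1)) ^ k + k * (m / (m - 1)) ≤ (k + 1) * (1 + (exp 1 + 1) / log m) := by
  have hlog : 0 < log m := log_pos hm
  have hlog_le : log m ≤ m - 1 := log_le_sub_one_of_pos (by positivity)
  have hlinear : m / (m - 1) ≤ 1 + 1 / log m := by
    calc m / (m - 1) = 1 + 1 / (m - 1) := by field_simp [(sub_pos.2 hm).ne']; ring
      _ ≤ 1 + 1 / log m := by gcongr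
  calc (m / (m - 1)) ^ k + k * (m / (m - 1))
      ≤ (1 + exp 1 * k / log m) + k * (1 + 1 / log m) := by
        gcongr
        exact div_sub_one_pow_le hm hk
    _ = (k + 1) + k * ((exp 1 + 1) / log m) := by ring
    _ ≤ (k + 1) + (k + 1) * ((exp 1 + 1) / log m) := by gcongr; linarith
    _ = (k + 1) * (1 + (exp 1 + 1) / log m) := by ring

theorem one_sub_div_log_le_card_filter_nonempty_div (α β : Type*) [Fintype α] [DecidableEq α]
    [Fintype β] [DecidableEq β] (hα : 0 < Fintype.card α)
    (hαβ : Fintype.card α ≤ Fintype.card β * log (Fintype.card β)) :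
    1 - (exp 1 + 1) / log (Fintype.card β) ≤
      #{f : α → β | (aloneBalls f).Nonempty} / (Fintype.card β : ℝ) ^ Fintype.card α := by
  have hα' : (0 : ℝ) < Fintype.card α := by exact_mod_cast hα
  have hlog : 0 < log (Fintype.card β) :=
    pos_of_mul_pos_right (hα'.trans_le hαβ) (Nat.cast_nonneg _)
  have hβ : 1 < (Fintype.card β : ℝ) := (log_pos_iff (Nat.cast_nonneg _)).1 hlog
  have hsecond := card_mul_pow_le_card_filter_nonempty_mul α β hα (by exact_mod_cast hβ)
  have htotal : (#{f : α → β | (aloneBalls f).Nonempty} : ℝ) ≤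
      (Fintype.card β : ℝ) ^ Fintype.card α := by
    exact_mod_cast (card_le_univ _).trans_eq Fintype.card_fun
  have hk : ((Fintype.card α - 1 : ℕ) : ℝ) = Fintype.card α - 1 := Nat.cast_pred hα
  have hfactor := div_sub_one_pow_add_mul_le hβ (k := Fintype.card α - 1) (by linarith)
  rw [hk, sub_add_cancel] at hfactor
  rw [hk] at hsecond
  set N : ℝ := (#{f : α → β | (aloneBalls f).Nonempty} : ℝ)
  set n : ℝ := (Fintype.card α : ℝ)
  set δ : ℝ := (exp 1 + 1) / log (Fintype.card β)
  set T : ℝ := (Fintype.card β : ℝ) ^ Fintype.card α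
  have hT : T ≤ N * (1 + δ) := by
    refine le_of_mul_le_mul_left ?_ hα'
    calc n * T ≤ N * (n * (1 + δ)) := hsecond.trans (by gcongr)
      _ = n * (N * (1 + δ)) := by ring
  rw [le_div_iff₀ (by positivity)]
  have hNδ : N * δ ≤ T * δ := by gcongr
  linarith

end BallsInBins

theorem stmt_10_general (ε : ℝ) (hε : 0 < ε) :
    ∃ M : ℕ, ∀ m : ℕ, M < m → ∀ n : ℕ, 0 < n → (n : ℝ) ≤ (m : ℝ) * Real.log m →
      1 - ε ≤
        (Nat.card {f : Fin n → Fin m //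
            ∃ b : Fin m, Nat.card {j : Fin n // f j = b} = 1} : ℝ) / (m : ℝ) ^ n := by
  refine ⟨⌈exp ((exp 1 + 1) / ε)⌉₊, fun m hm n hn hnm => ?_⟩
  have hlog : (exp 1 + 1) / ε < log m :=
    (lt_log_iff_exp_lt (mod_cast hm.bot_lt)).2 (Nat.lt_of_ceil_lt hm)
  have hlog0 : 0 < log m := lt_trans (by positivity) hlog
  simp only [BallsInBins.exists_card_fiber_eq_one_iff]
  rw [Nat.card_eq_fintype_card, Fintype.card_subtype]
  calc 1 - ε ≤ 1 - (exp 1 + 1) / log m := by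
        gcongr
        exact (div_le_comm₀ hε hlog0).1 hlog.le
    _ ≤ _ := by
        simpa only [Fintype.card_fin] using
          BallsInBins.one_sub_div_log_le_card_filter_nonempty_div (Fin n) (Fin m)
            (by simpa using hn) (by simpa using hnm)

/-- for every `ε > 0` there is `M` such that for all `m > M` and all `n` with
`m < n < m·log m`, when `n` balls are tossed uniformly and independently into `m` bins
(modeled by the uniform distribution on `Fin n → Fin m`, probabilities being ratios of counts
of outcomes to `m ^ n`), the probability that at least one bin contains exactly one ball is at
least `(1 − e^{−e})·e^{−1} − ε`. -/
theorem stmt_10 (ε : ℝ) (hε : 0 < ε) :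
    ∃ M : ℕ, ∀ m : ℕ, M < m → ∀ n : ℕ, m < n → (n : ℝ) < (m : ℝ) * Real.log m →
      (1 - Real.exp (-Real.exp 1)) * Real.exp (-1) - ε ≤
        (Nat.card {f : Fin n → Fin m //
            ∃ b : Fin m, Nat.card {j : Fin n // f j = b} = 1} : ℝ) / (m : ℝ) ^ n := by
  obtain ⟨M, hM⟩ := stmt_10_general ε hε
  refine ⟨M, fun m hm n hmn hn => le_trans ?_ (hM m hm n (m.zero_le.trans_lt hmn) hn.le)⟩
  gcongr
  exact mul_le_one₀ (sub_le_self 1 (exp_pos _).le) (exp_pos _).le (exp_le_one_iff.2 (by norm_num))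
end

section
/- Let x_1,…,x_n (robots) and y_1,…,y_n (targets) be 2n mutually independent uniformly distributed random points in the unit square [0,1]² ⊂ ℝ², and let q_1,…,q_m be pairwise disjoint measurable subsets of [0,1]², covering [0,1]², each of Lebesgue measure 1/m. For each i let A_i := #{ j : x_j ∈ q_i } and B_i := #{ j : y_j ∈ q_i }. Then the expected total number of robots left unmatched after matching robots one-to-one with targets within each region until no more matchings can be made satisfies E[ Σ_{i=1}^m max(A_i − B_i, 0) ] ≤ sqrt( n(m−1)/2 ). -/
open MeasureTheory

/-- The closed unit square `[0,1]² ⊂ ℝ²` (with the Euclidean norm). -/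
def unitSquare : Set (EuclideanSpace ℝ (Fin 2)) :=
  {p | ∀ i, p i ∈ Set.Icc (0 : ℝ) 1}

/-- The uniform probability measure on the unit square. -/
noncomputable def unifSquare : Measure (EuclideanSpace ℝ (Fin 2)) :=
  volume.restrict unitSquare

/-!
In each region the number of unmatched robots is the positive part of `A - B`, where `A` and `B`
are independent counts with the same law. As `A - B` is centred, `E[max (A - B) 0] = E|A - B| / 2`,
which is at most `√(Var A + Var B) / 2 = √(Var A / 2)`. A count is a sum of independent indicators,
so `Var A = ∑ j, p j * (1 - p j)`, where `p j` is the probability that point `j` lies in the region.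
Cauchy–Schwarz over the `m` regions, applied once to the square roots and once to the probabilities,
which sum to `1` for each point, turns the sum of these bounds into `√(n * (m - 1) / 2)`.
-/

section PositivePart

open ProbabilityTheory

variable {Ω Ω' : Type*} [MeasurableSpace Ω] [MeasurableSpace Ω'] {P : Measure Ω} {P' : Measure Ω'}

lemma memLp_sub_prod {E : Type*} [NormedAddCommGroup E] [IsFiniteMeasure P] [IsFiniteMeasure P']
    {p : ENNReal} {X : Ω → E} {Y : Ω' → E} (hX : MemLp X p P) (hY : MemLp Y p P') :
    MemLp (fun z : Ω × Ω' => X z.1 - Y z.2) p (P.prod P') :=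
  (hX.comp_fst P').sub (hY.comp_snd P)

variable [IsProbabilityMeasure P] [IsProbabilityMeasure P'] {X : Ω → ℝ} {Y : Ω' → ℝ}

lemma integral_abs_le_sqrt_integral_sq (hX : MemLp X 2 P) :
    ∫ ω, |X ω| ∂P ≤ √(∫ ω, X ω ^ 2 ∂P) := by
  have hvar : 0 ≤ Var[|X|; P] := variance_nonneg _ _
  rw [variance_eq_sub hX.abs] at hvar
  simp only [Pi.pow_apply, Pi.abs_apply, sq_abs] at hvar
  exact Real.le_sqrt_of_sq_le (sub_nonneg.mp hvar)

lemma integral_max_zero_le_half_sqrt_variance (hX : MemLp X 2 P) (hmean : P[X] = 0) :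
    ∫ ω, max (X ω) 0 ∂P ≤ √Var[X; P] / 2 := by
  have hmax (ω : Ω) : max (X ω) 0 = (|X ω| + X ω) / 2 := by
    rw [abs_add_eq_two_nsmul_posPart, posPart_def, nsmul_eq_mul, Nat.cast_ofNat,
      mul_div_cancel_left₀ _ two_ne_zero]
  calc ∫ ω, max (X ω) 0 ∂P = (∫ ω, |X ω| ∂P) / 2 := by
        have hX_int : Integrable X P := hX.integrable one_le_two
        simp only [hmax]
        rw [integral_div, integral_add hX_int.abs hX_int, hmean, add_zero]
    _ ≤ √Var[X; P] / 2 := by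
        rw [variance_of_integral_eq_zero hX.aemeasurable hmean]
        gcongr
        exact integral_abs_le_sqrt_integral_sq hX

lemma variance_sub_prod (hX : MemLp X 2 P) (hY : MemLp Y 2 P') :
    Var[fun z : Ω × Ω' => X z.1 - Y z.2; P.prod P'] = Var[X; P] + Var[Y; P'] := by
  simpa only [Pi.neg_apply, ← sub_eq_add_neg, variance_neg] using variance_add_prod hX hY.neg

lemma integral_max_sub_zero_prod_le (hX : MemLp X 2 P) (hY : MemLp Y 2 P') (hmean : P[X] = P'[Y]) :
    ∫ z, max (X z.1 - Y z.2) 0 ∂(P.prod P') ≤ √(Var[X; P] + Var[Y; P']) / 2 := by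
  have hcentred : ∫ z, (X z.1 - Y z.2) ∂(P.prod P') = 0 := by
    rw [integral_sub ((hX.comp_fst P').integrable one_le_two)
      ((hY.comp_snd P).integrable one_le_two), integral_fun_fst, integral_fun_snd, hmean]
    simp
  rw [← variance_sub_prod hX hY]
  exact integral_max_zero_le_half_sqrt_variance (memLp_sub_prod hX hY) hcentred

end PositivePart

lemma natCast_sub_eq_max {R : Type*} [Ring R] [LinearOrder R] [IsStrictOrderedRing R] (a b : ℕ) :
    ((a - b : ℕ) : R) = max ((a : R) - b) 0 := by
  rw [← sub_self (b : R), max_sub_sub_right, eq_sub_iff_add_eq]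
  exact_mod_cast tsub_add_eq_max

section VisitCount

open ProbabilityTheory

variable {ι α : Type*}

/-- The number of points of the configuration `x` that lie in the region `s`: the counts `A_i` and
`B_i` of the paper are `visitCount (q i) x` and `visitCount (q i) y`. For an infinite index type it
is `0` when infinitely many points lie in `s`. -/
noncomputable def visitCount (s : Set α) (x : ι → α) : ℕ :=
  Nat.card {j : ι // x j ∈ s}

variable [Fintype ι]

lemma visitCount_eq_sum_indicator (s : Set α) :
    (fun x : ι → α => (visitCount s x : ℝ)) =
      ∑ j : ι, fun x : ι → α => s.indicator (1 : α → ℝ) (x j) := by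
  classical
  ext x
  simp [visitCount, Fintype.card_subtype, Set.indicator_apply]

variable [MeasurableSpace α] {s : Set α}

lemma memLp_indicator_one (p : ENNReal) (μ : Measure α) [IsFiniteMeasure μ]
    (hs : MeasurableSet s) : MemLp (s.indicator (1 : α → ℝ)) p μ :=
  memLp_indicator_const p hs 1 (.inr (measure_ne_top μ s))

lemma variance_indicator_one (μ : Measure α) [IsProbabilityMeasure μ] (hs : MeasurableSet s) :
    Var[s.indicator (1 : α → ℝ); μ] = μ.real s * (1 - μ.real s) := by
  have hsq : s.indicator (1 : α → ℝ) ^ 2 = s.indicator 1 := by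
    ext x
    by_cases hx : x ∈ s <;> simp [hx]
  rw [variance_eq_sub (memLp_indicator_one 2 μ hs), hsq, integral_indicator_one hs]
  ring

variable (μ : ι → Measure α) [∀ j, IsProbabilityMeasure (μ j)]

lemma memLp_visitCount (p : ENNReal) (hs : MeasurableSet s) :
    MemLp (fun x : ι → α => (visitCount s x : ℝ)) p (Measure.pi μ) := by
  rw [visitCount_eq_sum_indicator]
  exact memLp_finsetSum' _ fun j _ =>
    (memLp_indicator_one p (μ j) hs).comp_measurePreserving (measurePreserving_eval μ j)

lemma variance_visitCount (hs : MeasurableSet s) :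
    Var[fun x : ι → α => (visitCount s x : ℝ); Measure.pi μ] =
      ∑ j, (μ j).real s * (1 - (μ j).real s) := by
  rw [visitCount_eq_sum_indicator, variance_sum_pi fun j => memLp_indicator_one 2 (μ j) hs]
  simp only [variance_indicator_one _ hs]

lemma integrable_visitCount_sub (hs : MeasurableSet s) :
    Integrable (fun ω : (ι → α) × (ι → α) => ((visitCount s ω.1 - visitCount s ω.2 : ℕ) : ℝ))
      ((Measure.pi μ).prod (Measure.pi μ)) := by
  simp only [natCast_sub_eq_max]
  have hcount := memLp_visitCount μ 1 hs
  exact ((memLp_sub_prod hcount hcount).integrable le_rfl).pos_part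

lemma integral_visitCount_sub_le (hs : MeasurableSet s) :
    ∫ ω : (ι → α) × (ι → α), ((visitCount s ω.1 - visitCount s ω.2 : ℕ) : ℝ)
        ∂((Measure.pi μ).prod (Measure.pi μ))
      ≤ √((∑ j, (μ j).real s * (1 - (μ j).real s)) / 2) := by
  simp only [natCast_sub_eq_max]
  have hcount := memLp_visitCount μ 2 hs
  refine (integral_max_sub_zero_prod_le hcount hcount rfl).trans_eq ?_
  rw [variance_visitCount μ hs, ← Real.sqrt_sq zero_le_two, ← Real.sqrt_div' _ (by positivity)]
  congr 1
  ring

end VisitCount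

section CauchySchwarz

variable {κ : Type*} [Fintype κ]

lemma sum_sqrt_le_sqrt_card_mul_sum {f : κ → ℝ} (hf : ∀ i, 0 ≤ f i) :
    ∑ i, √(f i) ≤ √(Fintype.card κ * ∑ i, f i) := by
  refine Real.le_sqrt_of_sq_le ?_
  simpa [Real.sq_sqrt (hf _)] using
    sq_sum_le_card_mul_sum_sq (s := Finset.univ) (f := fun i => √(f i))

lemma card_mul_sum_mul_one_sub_le {p : κ → ℝ} (hp : ∑ i, p i = 1) :
    Fintype.card κ * ∑ i, p i * (1 - p i) ≤ Fintype.card κ - 1 := by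
  have hsq : (1 : ℝ) ≤ Fintype.card κ * ∑ i, p i ^ 2 := by
    simpa [hp] using sq_sum_le_card_mul_sum_sq (s := Finset.univ) (f := p)
  have hsum : ∑ i, p i * (1 - p i) = 1 - ∑ i, p i ^ 2 := by
    rw [← hp, ← Finset.sum_sub_distrib]
    exact Finset.sum_congr rfl fun i _ => by rw [hp]; ring
  rw [hsum]
  linarith

end CauchySchwarz

theorem stmt_15_general {ι κ α : Type*} [Fintype ι] [Fintype κ] [MeasurableSpace α]
    (μ : ι → Measure α) [∀ j, IsProbabilityMeasure (μ j)] {q : κ → Set α}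
    (hq : ∀ i, MeasurableSet (q i)) (hsum : ∀ j, ∑ i, (μ j).real (q i) = 1) :
    ∫ ω : (ι → α) × (ι → α), (∑ i, ((visitCount (q i) ω.1 - visitCount (q i) ω.2 : ℕ) : ℝ))
        ∂((Measure.pi μ).prod (Measure.pi μ))
      ≤ √(Fintype.card ι * (Fintype.card κ - 1) / 2) := by
  let v (i : κ) (j : ι) : ℝ := (μ j).real (q i) * (1 - (μ j).real (q i))
  have hv (i : κ) (j : ι) : 0 ≤ v i j :=
    mul_nonneg measureReal_nonneg (sub_nonneg.mpr measureReal_le_one)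
  rw [integral_finsetSum _ fun i _ => integrable_visitCount_sub μ (hq i)]
  calc _ ≤ ∑ i, √((∑ j, v i j) / 2) :=
        Finset.sum_le_sum fun i _ => integral_visitCount_sub_le μ (hq i)
    _ ≤ √(Fintype.card κ * ∑ i, (∑ j, v i j) / 2) :=
        sum_sqrt_le_sqrt_card_mul_sum fun i => div_nonneg (Finset.sum_nonneg fun j _ => hv i j)
          zero_le_two
    _ = √((∑ j, Fintype.card κ * ∑ i, v i j) / 2) := by
        rw [← Finset.sum_div, Finset.sum_comm, ← Finset.mul_sum, mul_div_assoc]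
    _ ≤ √((∑ _j : ι, ((Fintype.card κ : ℝ) - 1)) / 2) := by
        gcongr with j
        exact card_mul_sum_mul_one_sub_le (hsum j)
    _ = √(Fintype.card ι * (Fintype.card κ - 1) / 2) := by
        rw [Finset.sum_const, Finset.card_univ, nsmul_eq_mul]

section UnitSquare

lemma unitSquare_eq_preimage_ofLp :
    unitSquare = WithLp.ofLp ⁻¹' Set.univ.pi fun _ : Fin 2 => Set.Icc (0 : ℝ) 1 := by
  ext p
  simp only [unitSquare, Set.mem_ofPred_eq, Set.mem_preimage, Set.mem_univ_pi]

lemma volume_unitSquare : volume unitSquare = 1 := by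
  rw [unitSquare_eq_preimage_ofLp, (PiLp.volume_preserving_ofLp (Fin 2)).measure_preimage
    (MeasurableSet.univ_pi fun _ => measurableSet_Icc).nullMeasurableSet, volume_pi_pi]
  simp

instance isProbabilityMeasure_unifSquare : IsProbabilityMeasure unifSquare :=
  ⟨by rw [unifSquare, Measure.restrict_apply_univ, volume_unitSquare]⟩

lemma unifSquare_real_of_subset {s : Set (EuclideanSpace ℝ (Fin 2))} (hs : s ⊆ unitSquare) :
    unifSquare.real s = volume.real s := by
  rw [measureReal_def, unifSquare, Measure.restrict_eq_self _ hs, measureReal_def]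

end UnitSquare

/-- let `x₁,…,x_n` (robots) and `y₁,…,y_n` (targets) be `2n` mutually
independent uniform points in the unit square (modeled by the product measure on pairs of
configurations `ω = (x, y)`), and let `q₁,…,q_m` be pairwise disjoint measurable subsets of
the unit square covering it, each of Lebesgue measure `1/m`.  With `A_i = #{j : x_j ∈ q_i}`
and `B_i = #{j : y_j ∈ q_i}`, the expected total number of robots left unmatched after a
maximal one-to-one robot–target matching within each region, namely
`E[Σ_i max(A_i − B_i, 0)]` (here `max(A_i − B_i, 0)` is the truncated subtraction
`A_i - B_i` in `ℕ`), is at most `sqrt(n·(m−1)/2)`. -/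
theorem stmt_15 (n m : ℕ) (hm : 1 ≤ m) (q : Fin m → Set (EuclideanSpace ℝ (Fin 2)))
    (hmeas : ∀ i, MeasurableSet (q i))
    (hsub : ∀ i, q i ⊆ unitSquare)
    (hdisj : ∀ i j, i ≠ j → Disjoint (q i) (q j))
    (hcover : unitSquare ⊆ ⋃ i, q i)
    (hvol : ∀ i, volume (q i) = 1 / (m : ENNReal)) :
    ∫ ω : (Fin n → EuclideanSpace ℝ (Fin 2)) × (Fin n → EuclideanSpace ℝ (Fin 2)),
        (∑ i : Fin m,
          ((Nat.card {j : Fin n // ω.1 j ∈ q i} - Nat.card {j : Fin n // ω.2 j ∈ q i} : ℕ) : ℝ))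
        ∂((Measure.pi fun _ : Fin n => unifSquare).prod
            (Measure.pi fun _ : Fin n => unifSquare))
      ≤ Real.sqrt ((n : ℝ) * ((m : ℝ) - 1) / 2) := by
  have hm_ne : (m : ℝ) ≠ 0 := by positivity
  have hreal (i : Fin m) : unifSquare.real (q i) = 1 / m := by
    simp [unifSquare_real_of_subset (hsub i), measureReal_def, hvol]
  simpa [visitCount] using stmt_15_general (fun _ : Fin n => unifSquare) hmeas
    fun _ => by simp [hreal, hm_ne]
end
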